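/- For a positive recurrent state j, conditional on the event A_i = {X_0 = i and the chain ever visits j}, the proportion of time spent at j converges almost surely: P(lim_{n→∞} M_j(n)/n = 1/m_j | A_i) = 1. -/

import Mathlib

open MeasureTheory ProbabilityTheory Filter Topology
open scoped ENNReal NNReal

variable {S : Type*} [Countable S] [DecidableEq S]

/-- k-step transition probabilities of a transition matrix `P`. -/
noncomputable def kstep (P : S → S → ℝ) : ℕ → S → S → ℝ
  | 0 => fun i j => if i = j then 1 else 0
  | (k+1) => fun i j => ∑' l, kstep P k i l * P l j

/-- first passage probabilities `f^{(n)}_{ij}` (first visit to `j` at time exactly `n`). -/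
noncomputable def fpass (P : S → S → ℝ) (j : S) : ℕ → S → ℝ
  | 0 => fun _ => 0
  | 1 => fun i => P i j
  | (n+2) => fun i => ∑' l, if l = j then 0 else P i l * fpass P j (n+1) l

/-- probability `f_{ij}` of ever reaching `j` from `i`. -/
noncomputable def hitProb (P : S → S → ℝ) (i j : S) : ℝ := ∑' n, fpass P j n i

/-- mean return time `m_j` to `j` (in `ℝ≥0∞`). -/
noncomputable def meanReturn (P : S → S → ℝ) (j : S) : ℝ≥0∞ :=
  ∑' n : ℕ, (n : ℝ≥0∞) * ENNReal.ofReal (fpass P j n j)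

def PositiveRecurrent (P : S → S → ℝ) (j : S) : Prop :=
  hitProb P j j = 1 ∧ meanReturn P j < ⊤

def NullRecurrent (P : S → S → ℝ) (j : S) : Prop :=
  hitProb P j j = 1 ∧ meanReturn P j = ⊤

def Transient (P : S → S → ℝ) (j : S) : Prop := hitProb P j j < 1

/-- `X` is a time-homogeneous Markov chain on `(Ω, μ)` with transition matrix `P`. -/
structure IsMarkovChain {Ω : Type*} [MeasurableSpace Ω] [MeasurableSpace S] (μ : Measure Ω)
    (X : ℕ → Ω → S) (P : S → S → ℝ) : Prop where
  isProb : IsProbabilityMeasure μ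
  meas : ∀ n, Measurable (X n)
  nonneg : ∀ i j, 0 ≤ P i j
  rowSum : ∀ i, ∑' j, P i j = 1
  markov : ∀ n (j : S) (f : ℕ → S),
    μ ({ω | X (n+1) ω = j} ∩ {ω | ∀ m ≤ n, X m ω = f m})
      = ENNReal.ofReal (P (f n) j) * μ {ω | ∀ m ≤ n, X m ω = f m}

/-- `M_j(n)`: number of visits to `j` at times `1,…,n`. -/
noncomputable def visits {Ω : Type*} (X : ℕ → Ω → S) (j : S) (n : ℕ) (ω : Ω) : ℝ :=
  ∑ k ∈ Finset.Icc 1 n, if X k ω = j then (1:ℝ) else 0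

/-!
By the strong Markov property, conditionally on `j` being visited, the gaps between successive
visits to `j` are independent with law `d ↦ f^{(d)}_{jj}`, hence integrable with mean `m_j`. The
strong law of large numbers shows that the time of the `k`-th visit is asymptotic to `k m_j`, and
inverting this relation gives `M_j(n) / n → 1 / m_j`.

The `σ`-algebra of the state space is arbitrary, so the events `{X_n = x}` need not be measurable
and `μ` is only an outer measure on them. Since the rows of `P` sum to `1`, the Markov property
forces this outer measure to be additive along the paths issued from a fixed initial state `i`.
Carathéodory's theorem, applied to its trace on `{X_0 = i}`, thus makes these events measurable
without changing the transition probabilities, and yields a chain to which the first part applies.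
-/

section Counting

variable {p q : ℕ → Prop} {k t : ℕ}

theorem nth_eq_iff_count_eq [DecidablePred p] (ht : t ≠ 0) :
    Nat.nth p k = t ↔ p t ∧ Nat.count p t = k := by
  constructor
  · rintro rfl
    exact ⟨Nat.nth_mem_of_ne_zero ht, Nat.count_nth (Nat.lt_card_toFinset_of_nth_ne_zero ht)⟩
  · rintro ⟨hp, rfl⟩
    exact Nat.nth_count hp

theorem nth_eq_of_forall_le_iff (h : ∀ m ≤ t, p m ↔ q m) (ht : t ≠ 0) (hp : Nat.nth p k = t) :
    Nat.nth q k = t := by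
  classical
  obtain ⟨hpt, hcount⟩ := (nth_eq_iff_count_eq ht).1 hp
  refine (nth_eq_iff_count_eq ht).2 ⟨(h t le_rfl).1 hpt, ?_⟩
  exact ((Nat.count_mono_left fun m hm => (h m hm.le).2).antisymm
    (Nat.count_mono_left fun m hm => (h m hm.le).1)).trans hcount

theorem nth_succ_eq_add_iff (ht : t ≠ 0) (hk : Nat.nth p k = t) (d : ℕ) :
    Nat.nth p (k + 1) = t + (d + 1) ↔
      p (t + (d + 1)) ∧ ∀ m, t < m → m < t + (d + 1) → ¬ p m := by
  classical
  obtain ⟨hpt, hcount⟩ := (nth_eq_iff_count_eq ht).1 hk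
  have hadd : Nat.count p (t + (d + 1)) = k + 1 + Nat.count (fun m => p (t + 1 + m)) d := by
    rw [show t + (d + 1) = t + 1 + d by omega, Nat.count_add, Nat.count_succ, if_pos hpt, hcount]
  rw [nth_eq_iff_count_eq (by omega), hadd, Nat.add_eq_left, Nat.count_iff_forall_not]
  refine and_congr_right fun _ => ⟨fun h m htm hmd => ?_, fun h m hm => h _ (by omega) (by omega)⟩
  obtain ⟨a, rfl⟩ := Nat.exists_eq_add_of_lt htm
  simpa only [add_right_comm] using h a (by omega)

theorem tendsto_count_div_of_tendsto_nth_div [DecidablePred p] (hp : (Set.ofPred p).Infinite)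
    {m : ℝ} (h : Tendsto (fun k : ℕ => (Nat.nth p k : ℝ) / k) atTop (𝓝 m)) :
    Tendsto (fun n : ℕ => (Nat.count p n : ℝ) / n) atTop (𝓝 m⁻¹) := by
  have hnth : ∀ k, k ≤ Nat.nth p k := fun k => (Nat.nth_strictMono hp).le_apply
  have hm : 1 ≤ m := ge_of_tendsto h <| (eventually_gt_atTop 0).mono fun k hk =>
    (one_le_div (by positivity)).2 (by exact_mod_cast hnth k)
  have hinv : Tendsto (fun k : ℕ => (k : ℝ) / Nat.nth p k) atTop (𝓝 m⁻¹) := by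
    simpa only [inv_div] using h.inv₀ (by positivity)
  have hinv_succ : Tendsto (fun k : ℕ => ((k + 1 : ℕ) : ℝ) / Nat.nth p k) atTop (𝓝 m⁻¹) := by
    have hzero : Tendsto (fun k => (Nat.nth p k : ℝ)⁻¹) atTop (𝓝 0) :=
      tendsto_inv_atTop_zero.comp
        (tendsto_natCast_atTop_atTop.comp (Nat.nth_strictMono hp).tendsto_atTop)
    simpa [add_div] using hinv.add hzero
  have hcount : Tendsto (Nat.count p) atTop atTop :=
    tendsto_atTop_atTop_of_monotone (Nat.count_monotone p) fun k =>
      ⟨Nat.nth p k, (Nat.count_nth_of_infinite hp k).ge⟩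
  refine tendsto_of_tendsto_of_tendsto_of_le_of_le' (hinv.comp hcount)
    (hinv_succ.comp ((tendsto_sub_atTop_nat 1).comp hcount)) ?_ ?_
  · filter_upwards [eventually_gt_atTop 0] with n hn
    have hle : n ≤ Nat.nth p (Nat.count p n) := Nat.le_nth_count hp n
    simp only [Function.comp_apply]
    gcongr
  · filter_upwards [hcount.eventually_gt_atTop 1] with n hn
    have hlt : Nat.nth p (Nat.count p n - 1) < n := Nat.nth_lt_of_lt_count (by omega)
    have hpos : 0 < Nat.nth p (Nat.count p n - 1) := (hnth _).trans_lt' (by omega)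
    simp only [Function.comp_apply, Nat.sub_add_cancel hn.le]
    gcongr

end Counting

section FirstPassage

variable {E : Type*} {P : E → E → ℝ}

theorem summable_row (hrow : ∀ i, ∑' j, P i j = 1) (i : E) : Summable (P i) := by
  by_contra h
  simpa [tsum_eq_zero_of_not_summable h] using hrow i

theorem tsum_ofReal_row (hP : ∀ i j, 0 ≤ P i j) (hrow : ∀ i, ∑' j, P i j = 1) (i : E) :
    ∑' j, ENNReal.ofReal (P i j) = 1 := by
  rw [← ENNReal.ofReal_tsum_of_nonneg (hP i) (summable_row hrow i), hrow, ENNReal.ofReal_one]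

variable [DecidableEq E]

theorem ite_mul_mem_Icc (hP : ∀ i j, 0 ≤ P i j) {f : E → ℝ} (hf : ∀ l, f l ∈ Set.Icc (0 : ℝ) 1)
    (i j l : E) : (if l = j then 0 else P i l * f l) ∈ Set.Icc 0 (P i l) := by
  split_ifs
  exacts [⟨le_rfl, hP i l⟩,
    ⟨mul_nonneg (hP i l) (hf l).1, mul_le_of_le_one_right (hP i l) (hf l).2⟩]

theorem fpass_mem_Icc (hP : ∀ i j, 0 ≤ P i j) (hrow : ∀ i, ∑' j, P i j = 1) (j : E) :
    ∀ n i, fpass P j n i ∈ Set.Icc (0 : ℝ) 1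
  | 0, _ => by simp [fpass]
  | 1, i => ⟨hP i j, hrow i ▸ (summable_row hrow i).le_tsum j fun l _ => hP i l⟩
  | n + 2, i => by
    have hterm := ite_mul_mem_Icc hP (fpass_mem_Icc hP hrow j (n + 1)) i j
    have hsum := summable_row hrow i
    exact ⟨tsum_nonneg fun l => (hterm l).1, hrow i ▸ (hsum.of_nonneg_of_le
      (fun l => (hterm l).1) fun l => (hterm l).2).tsum_le_tsum (fun l => (hterm l).2) hsum⟩

theorem ofReal_fpass_add_two (hP : ∀ i j, 0 ≤ P i j) (hrow : ∀ i, ∑' j, P i j = 1) (j : E) (n : ℕ)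
    (i : E) : ENNReal.ofReal (fpass P j (n + 2) i) =
      ∑' l, if l = j then 0 else ENNReal.ofReal (P i l) * ENNReal.ofReal (fpass P j (n + 1) l) := by
  have hterm := ite_mul_mem_Icc hP (fpass_mem_Icc hP hrow j (n + 1)) i j
  rw [fpass, ENNReal.ofReal_tsum_of_nonneg (fun l => (hterm l).1)
    ((summable_row hrow i).of_nonneg_of_le (fun l => (hterm l).1) fun l => (hterm l).2)]
  refine tsum_congr fun l => ?_
  split_ifs
  exacts [ENNReal.ofReal_zero, ENNReal.ofReal_mul (hP i l)]

theorem tsum_ofReal_fpass_succ (hP : ∀ i j, 0 ≤ P i j) (hrow : ∀ i, ∑' j, P i j = 1) {i j : E}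
    (h : hitProb P i j = 1) : ∑' n, ENNReal.ofReal (fpass P j (n + 1) i) = 1 := by
  have hsum : Summable fun n => fpass P j n i := by
    by_contra hns
    simp [hitProb, tsum_eq_zero_of_not_summable hns] at h
  calc ∑' n, ENNReal.ofReal (fpass P j (n + 1) i)
      = ∑' n, ENNReal.ofReal (fpass P j n i) := by
        rw [tsum_eq_zero_add' (f := fun n => ENNReal.ofReal (fpass P j n i)) ENNReal.summable]
        simp [fpass]
    _ = ENNReal.ofReal (hitProb P i j) :=
        (ENNReal.ofReal_tsum_of_nonneg (fun n => (fpass_mem_Icc hP hrow j n i).1) hsum).symm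
    _ = 1 := by rw [h, ENNReal.ofReal_one]

end FirstPassage

section Path

variable {Ω E : Type*} {X : ℕ → Ω → E} {j : E} {F : Set Ω} {k n t : ℕ} {ω ω' : Ω}

/-- The path `(X_0, …, X_n)`. -/
def pathUpTo (X : ℕ → Ω → E) (n : ℕ) (ω : Ω) : Fin (n + 1) → E := fun m => X m ω

/-- `F` is an event of the past up to time `n`: whether it occurs can be read off the path
`X_0, …, X_n`. For a countable discrete state space these events form the `σ`-algebra generated by
`X_0, …, X_n`. -/
def DeterminedUpTo (X : ℕ → Ω → E) (n : ℕ) (F : Set Ω) : Prop :=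
  ∀ ω ω', (∀ m ≤ n, X m ω' = X m ω) → ω ∈ F → ω' ∈ F

/-- The first visit to `j` strictly after time `n` takes place at time `n + d`. -/
def nextVisit (X : ℕ → Ω → E) (j : E) (n d : ℕ) : Set Ω :=
  {ω | X (n + d) ω = j ∧ ∀ m, n < m → m < n + d → X m ω ≠ j}

/-- The time of the `(k + 1)`-st visit to `j` at a positive time, with value `0` if there are at
most `k` such visits. -/
noncomputable def visitTime (X : ℕ → Ω → E) (j : E) (k : ℕ) (ω : Ω) : ℕ :=
  Nat.nth (fun t => 1 ≤ t ∧ X t ω = j) k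

/-- The time between the `(k + 1)`-st and the `(k + 2)`-nd visit to `j`. It is positive whenever
both visits take place, and `0` if the second one does not. -/
noncomputable def visitGap (X : ℕ → Ω → E) (j : E) (k : ℕ) (ω : Ω) : ℕ :=
  visitTime X j (k + 1) ω - visitTime X j k ω

/-- `H` is an event of the past up to the `(k + 1)`-st visit to `j`, the analogue for the random
time `visitTime X j k` of `DeterminedUpTo`. -/
def DeterminedUpToVisit (X : ℕ → Ω → E) (j : E) (k : ℕ) (H : Set Ω) : Prop :=
  ∀ t ≠ 0, DeterminedUpTo X t (H ∩ {ω | visitTime X j k ω = t})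

theorem pathUpTo_eq_iff : pathUpTo X n ω' = pathUpTo X n ω ↔ ∀ m ≤ n, X m ω' = X m ω := by
  simp only [funext_iff, pathUpTo, Fin.forall_iff, Nat.lt_succ_iff]

theorem DeterminedUpTo.preimage_image_pathUpTo (hF : DeterminedUpTo X n F) :
    pathUpTo X n ⁻¹' (pathUpTo X n '' F) = F := by
  refine subset_antisymm ?_ (Set.subset_preimage_image _ _)
  rintro ω' ⟨ω, hω, h⟩
  exact hF ω ω' (pathUpTo_eq_iff.1 h.symm) hω

theorem DeterminedUpTo.inter_succ (hF : DeterminedUpTo X n F) (l : E) :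
    DeterminedUpTo X (n + 1) (F ∩ {ω | X (n + 1) ω = l}) :=
  fun ω ω' h hω => ⟨hF ω ω' (fun m hm => h m (hm.trans n.le_succ)) hω.1, (h _ le_rfl).trans hω.2⟩

theorem nextVisit_one : nextVisit X j n 1 = {ω | X (n + 1) ω = j} := by
  ext ω
  exact and_iff_left fun m _ _ => by omega

theorem nextVisit_add_two (d : ℕ) :
    nextVisit X j n (d + 2) = {ω | X (n + 1) ω ≠ j} ∩ nextVisit X j (n + 1) (d + 1) := by
  ext ω
  simp only [nextVisit, Set.mem_inter_iff, Set.mem_ofPred_eq,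
    show n + 1 + (d + 1) = n + (d + 2) by omega]
  constructor
  · rintro ⟨hvisit, hgap⟩
    exact ⟨hgap _ (by omega) (by omega), hvisit, fun m hm => hgap m (by omega)⟩
  · rintro ⟨hsucc, hvisit, hgap⟩
    refine ⟨hvisit, fun m hnm hmd => ?_⟩
    obtain rfl | hm := (Nat.succ_le_of_lt hnm).eq_or_lt
    exacts [hsucc, hgap m hm hmd]

theorem visitTime_ne_zero_anti {a : ℕ} (hak : a ≤ k) (hk : visitTime X j k ω ≠ 0) :
    visitTime X j a ω ≠ 0 :=
  Nat.nth_ne_zero_anti (by simp) hak hk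

theorem apply_visitTime (hk : visitTime X j k ω ≠ 0) : X (visitTime X j k ω) ω = j :=
  (Nat.nth_mem_of_ne_zero hk).2

theorem visitTime_zero_ne_zero_iff : visitTime X j 0 ω ≠ 0 ↔ ∃ n ≥ 1, X n ω = j := by
  classical
  refine ⟨fun h => ⟨_, Nat.nth_mem_of_ne_zero h⟩, fun ⟨n, hn⟩ => ?_⟩
  refine visitTime_ne_zero_anti (Nat.zero_le (Nat.count (fun t => 1 ≤ t ∧ X t ω = j) n)) ?_
  rw [visitTime, Nat.nth_count hn]
  exact Nat.one_le_iff_ne_zero.1 hn.1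

theorem visitTime_congr {a : ℕ} (hak : a ≤ k) (hk : visitTime X j k ω = t) (ht : t ≠ 0)
    (h : ∀ m ≤ t, X m ω' = X m ω) : visitTime X j a ω' = visitTime X j a ω := by
  subst hk
  refine nth_eq_of_forall_le_iff (fun m hm => ?_) (visitTime_ne_zero_anti hak ht) rfl
  rw [h m (hm.trans (Nat.nth_le_nth' hak (Nat.lt_card_toFinset_of_nth_ne_zero ht)))]

theorem visitGap_eq_succ_iff (hk : visitTime X j k ω = t) (ht : t ≠ 0) (d : ℕ) :
    visitGap X j k ω = d + 1 ↔ ω ∈ nextVisit X j t (d + 1) := by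
  have hgap : visitGap X j k ω = d + 1 ↔ visitTime X j (k + 1) ω = t + (d + 1) := by
    rw [visitGap, hk]
    omega
  rw [hgap, visitTime, nth_succ_eq_add_iff ht hk]
  exact and_congr (and_iff_right (by omega))
    (forall₃_congr fun m htm _ => not_congr (and_iff_right (by omega)))

theorem visitTime_eq_add_sum_visitGap (hk : visitTime X j k ω ≠ 0) :
    visitTime X j k ω = visitTime X j 0 ω + ∑ l ∈ Finset.range k, visitGap X j l ω := by
  induction k with
  | zero => rw [Finset.sum_range_zero, add_zero]
  | succ k ih =>
    have hle : visitTime X j k ω ≤ visitTime X j (k + 1) ω :=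
      Nat.nth_le_nth' k.le_succ (Nat.lt_card_toFinset_of_nth_ne_zero hk)
    rw [Finset.sum_range_succ, ← add_assoc, ← ih (visitTime_ne_zero_anti k.le_succ hk), visitGap,
      Nat.add_sub_cancel' hle]

theorem determinedUpToVisit_univ : DeterminedUpToVisit X j k Set.univ :=
  fun _ ht _ _ h hω => ⟨trivial, (visitTime_congr le_rfl hω.2 ht h).trans hω.2⟩

theorem determinedUpToVisit_visitGap {a : ℕ} (hak : a < k) (d : ℕ) :
    DeterminedUpToVisit X j k {ω | visitGap X j a ω = d} := by
  rintro t ht ω ω' h ⟨hd, hω⟩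
  refine ⟨?_, (visitTime_congr le_rfl hω ht h).trans hω⟩
  rw [Set.mem_ofPred_eq, visitGap, visitTime_congr hak hω ht h, visitTime_congr hak.le hω ht h]
  exact hd

theorem visits_eq_count [DecidableEq E] (X : ℕ → Ω → E) (j : E) (n : ℕ) (ω : Ω) :
    visits X j n ω = Nat.count (fun t => 1 ≤ t ∧ X t ω = j) (n + 1) := by
  rw [visits, Finset.sum_boole, Nat.count_eq_card_filter_range]
  congr 2
  ext t
  simp only [Finset.mem_filter, Finset.mem_Icc, Finset.mem_range, Nat.lt_succ_iff]
  tauto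

theorem tendsto_visits_div [DecidableEq E] {m : ℝ} (hvisit : ∀ k, visitTime X j k ω ≠ 0)
    (h : Tendsto (fun k : ℕ => (visitTime X j k ω : ℝ) / k) atTop (𝓝 m)) :
    Tendsto (fun n : ℕ => visits X j n ω / n) atTop (𝓝 m⁻¹) := by
  have hinf : (Set.ofPred fun t => 1 ≤ t ∧ X t ω = j).Infinite :=
    fun hfin => hvisit _ (Nat.nth_of_card_le hfin le_rfl)
  have hcount := (tendsto_add_atTop_iff_nat 1).2 (tendsto_count_div_of_tendsto_nth_div hinf h)
  have hratio : Tendsto (fun n : ℕ => ((n + 1 : ℕ) : ℝ) / n) atTop (𝓝 1) := by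
    simpa using (tendsto_natCast_div_add_atTop (1 : ℝ)).inv₀ one_ne_zero
  refine (mul_one m⁻¹ ▸ hcount.mul hratio).congr fun n => ?_
  rw [visits_eq_count, div_mul_div_cancel₀ (by positivity)]

end Path

section CountableFibers

variable {Ω β γ : Type*} [MeasurableSpace Ω] {μ : Measure Ω} [Countable β] [MeasurableSpace β]

theorem measurable_of_forall_ne_measurableSet_fiber {g : Ω → β} {a : β}
    (h : ∀ b ≠ a, MeasurableSet (g ⁻¹' {b})) : Measurable g := by
  refine measurable_to_countable' fun b => ?_
  obtain rfl | hb := eq_or_ne b a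
  · have hcompl : g ⁻¹' {b} = (⋃ c ∈ ({b}ᶜ : Set β), g ⁻¹' {c})ᶜ := by
      rw [← Set.preimage_iUnion₂, Set.biUnion_of_singleton, Set.preimage_compl, compl_compl]
    rw [hcompl]
    exact (MeasurableSet.biUnion (Set.to_countable _) h).compl
  · exact h b hb

variable [MeasurableSingletonClass β]

theorem tsum_measure_inter_fiber {g : Ω → β} (hg : Measurable g) (A : Set Ω) :
    ∑' b, μ (A ∩ g ⁻¹' {b}) = μ A := by
  have hfiber : ∀ b, MeasurableSet (g ⁻¹' {b}) := fun b => hg (measurableSet_singleton b)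
  have htsum := tsum_measure_preimage_singleton (μ := μ.restrict A) (Set.to_countable Set.univ)
    fun b _ => hfiber b
  rw [tsum_univ fun b => μ.restrict A (g ⁻¹' {b}), Set.preimage_univ,
    Measure.restrict_apply_univ] at htsum
  rw [← htsum]
  exact tsum_congr fun b => by rw [Measure.restrict_apply (hfiber b), Set.inter_comm]

theorem indepFun_of_measure_inter_fiber [IsFiniteMeasure μ] [Countable γ] [MeasurableSpace γ]
    [MeasurableSingletonClass γ] {f : Ω → β} {g : Ω → γ} (hf : Measurable f) (hg : Measurable g)
    (h : ∀ b c, μ (f ⁻¹' {b} ∩ g ⁻¹' {c}) = μ (f ⁻¹' {b}) * μ (g ⁻¹' {c})) : IndepFun f g μ := by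
  rw [indepFun_iff_map_prod_eq_prod_map_map hf.aemeasurable hg.aemeasurable]
  refine Measure.ext_of_singleton fun ⟨b, c⟩ => ?_
  rw [Measure.map_apply (hf.prodMk hg) (measurableSet_singleton _), ← Set.singleton_prod_singleton,
    Set.mk_preimage_prod, Measure.prod_prod, Measure.map_apply hf (measurableSet_singleton b),
    Measure.map_apply hg (measurableSet_singleton c), h]

end CountableFibers

theorem cond_eq_one_of_ae_imp {Ω : Type*} [MeasurableSpace Ω] {μ : Measure Ω} [IsFiniteMeasure μ]
    {A T : Set Ω} (hA : μ A ≠ 0) (h : ∀ᵐ ω ∂μ, ω ∈ A → ω ∈ T) : μ[|A] T = 1 := by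
  have := cond_isProbabilityMeasure hA
  refine prob_le_one.antisymm ?_
  calc (1 : ℝ≥0∞) = (μ A)⁻¹ * μ A := (ENNReal.inv_mul_cancel hA (measure_ne_top μ A)).symm
    _ ≤ (μ A)⁻¹ * μ (T ∩ A) := by
        gcongr 1
        exact measure_mono_ae (h.mono fun ω hω hωA => ⟨hω hωA, hωA⟩)
    _ ≤ (μ A)⁻¹ * μ.restrict A T := by
        gcongr 1
        exact Measure.le_restrict_apply A T
    _ = μ[|A] T := by rw [ProbabilityTheory.cond, Measure.smul_apply, smul_eq_mul]

namespace IsMarkovChain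

section MeasurableSingletonClass

variable {Ω E : Type*} [MeasurableSpace Ω] [MeasurableSpace E] {μ : Measure Ω} {X : ℕ → Ω → E}
  {P : E → E → ℝ}

theorem measurable_pathUpTo (hX : IsMarkovChain μ X P) (n : ℕ) : Measurable (pathUpTo X n) :=
  measurable_pi_lambda _ fun m => hX.meas m

variable [Countable E] [MeasurableSingletonClass E] {j : E} {k n : ℕ} {F G H : Set Ω}

theorem measurableSet_of_determinedUpTo (hX : IsMarkovChain μ X P) (hF : DeterminedUpTo X n F) :
    MeasurableSet F := by
  rw [← hF.preimage_image_pathUpTo]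
  exact hX.measurable_pathUpTo n (Set.to_countable _).measurableSet

theorem measure_inter_eq_mul_of_forall_path (hX : IsMarkovChain μ X P) (hF : DeterminedUpTo X n F)
    {c : ℝ≥0∞} (h : ∀ ω ∈ F, μ ({ω' | ∀ m ≤ n, X m ω' = X m ω} ∩ G) =
      c * μ {ω' | ∀ m ≤ n, X m ω' = X m ω}) : μ (F ∩ G) = c * μ F := by
  rw [← tsum_measure_inter_fiber (hX.measurable_pathUpTo n) (F ∩ G),
    ← tsum_measure_inter_fiber (hX.measurable_pathUpTo n) F, ← ENNReal.tsum_mul_left]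
  refine tsum_congr fun g => ?_
  rw [Set.inter_right_comm]
  obtain hempty | ⟨ω, hω, rfl⟩ := (F ∩ pathUpTo X n ⁻¹' {g}).eq_empty_or_nonempty
  · simp [hempty]
  · have hfiber : F ∩ pathUpTo X n ⁻¹' {pathUpTo X n ω} = {ω' | ∀ m ≤ n, X m ω' = X m ω} := by
      ext ω'
      exact (and_iff_right_of_imp fun h' => hF ω ω' (pathUpTo_eq_iff.1 h') hω).trans
        pathUpTo_eq_iff
    rw [hfiber, h ω hω]

theorem measure_inter_succ_eq (hX : IsMarkovChain μ X P) (hF : DeterminedUpTo X n F) {x : E}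
    (hx : ∀ ω ∈ F, X n ω = x) (y : E) :
    μ (F ∩ {ω | X (n + 1) ω = y}) = ENNReal.ofReal (P x y) * μ F :=
  hX.measure_inter_eq_mul_of_forall_path hF fun ω hω => by
    rw [Set.inter_comm, hX.markov n y fun m => X m ω, hx ω hω]

theorem measure_inter_nextVisit [DecidableEq E] (hX : IsMarkovChain μ X P) (j : E) (d : ℕ) :
    ∀ {n : ℕ} {F : Set Ω}, DeterminedUpTo X n F → ∀ {x : E}, (∀ ω ∈ F, X n ω = x) →
      μ (F ∩ nextVisit X j n (d + 1)) = ENNReal.ofReal (fpass P j (d + 1) x) * μ F := by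
  induction d with
  | zero =>
    intro n F hF x hx
    rw [nextVisit_one, hX.measure_inter_succ_eq hF hx, fpass]
  | succ d ih =>
    intro n F hF x hx
    rw [← tsum_measure_inter_fiber (hX.meas (n + 1)), ofReal_fpass_add_two hX.nonneg hX.rowSum,
      ← ENNReal.tsum_mul_right]
    refine tsum_congr fun l => ?_
    split_ifs with hl
    · rw [zero_mul, nextVisit_add_two]
      refine measure_mono_null (fun ω hω => ?_) measure_empty
      exact hω.1.2.1 (hω.2.trans hl)
    · have hfirst : F ∩ nextVisit X j n (d + 2) ∩ X (n + 1) ⁻¹' {l} =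
          F ∩ {ω | X (n + 1) ω = l} ∩ nextVisit X j (n + 1) (d + 1) := by
        rw [nextVisit_add_two]
        ext ω
        constructor
        · rintro ⟨⟨hω, -, hnext⟩, hωl⟩
          exact ⟨⟨hω, hωl⟩, hnext⟩
        · rintro ⟨⟨hω, hωl⟩, hnext⟩
          exact ⟨⟨hω, fun hωj => hl (hωl.symm.trans hωj), hnext⟩, hωl⟩
      rw [hfirst, ih (hF.inter_succ l) fun ω hω => hω.2, hX.measure_inter_succ_eq hF hx,
        mul_left_comm, mul_assoc]

theorem measurable_visitTime (hX : IsMarkovChain μ X P) (j : E) (k : ℕ) :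
    Measurable (visitTime X j k) :=
  measurable_of_forall_ne_measurableSet_fiber fun t ht => by
    have hdet := determinedUpToVisit_univ (X := X) (j := j) (k := k) t ht
    exact hX.measurableSet_of_determinedUpTo (Set.univ_inter _ ▸ hdet)

theorem measurable_visitGap (hX : IsMarkovChain μ X P) (j : E) (k : ℕ) :
    Measurable (visitGap X j k) :=
  (hX.measurable_visitTime j (k + 1)).sub (hX.measurable_visitTime j k)

theorem aemeasurable_visitGap_ennreal (hX : IsMarkovChain μ X P) (j : E) (k : ℕ)
    (ν : Measure Ω) : AEMeasurable (fun ω => (visitGap X j k ω : ℝ≥0∞)) ν :=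
  (measurable_from_top.comp (hX.measurable_visitGap j k)).aemeasurable

theorem measurableSet_visitTime_ne_zero (hX : IsMarkovChain μ X P) (j : E) (k : ℕ) :
    MeasurableSet {ω | visitTime X j k ω ≠ 0} :=
  (hX.measurable_visitTime j k (measurableSet_singleton 0)).compl

variable [DecidableEq E]

theorem measure_inter_visitGap_succ (hX : IsMarkovChain μ X P) (hH : DeterminedUpToVisit X j k H)
    (d : ℕ) : μ (H ∩ {ω | visitTime X j k ω ≠ 0} ∩ {ω | visitGap X j k ω = d + 1}) =
      ENNReal.ofReal (fpass P j (d + 1) j) * μ (H ∩ {ω | visitTime X j k ω ≠ 0}) := by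
  rw [← tsum_measure_inter_fiber (hX.measurable_visitTime j k),
    ← tsum_measure_inter_fiber (hX.measurable_visitTime j k) (H ∩ _), ← ENNReal.tsum_mul_left]
  refine tsum_congr fun t => ?_
  rw [Set.inter_right_comm]
  obtain rfl | ht := eq_or_ne t 0
  · have hempty : H ∩ {ω | visitTime X j k ω ≠ 0} ∩ visitTime X j k ⁻¹' {0} = ∅ :=
      Set.eq_empty_of_forall_notMem fun ω hω => hω.1.2 hω.2
    simp [hempty]
  · have hvisit : H ∩ {ω | visitTime X j k ω ≠ 0} ∩ visitTime X j k ⁻¹' {t} =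
        H ∩ {ω | visitTime X j k ω = t} := by
      ext ω
      exact ⟨fun hω => ⟨hω.1.1, hω.2⟩, fun hω => ⟨⟨hω.1, fun h => ht (hω.2.symm.trans h)⟩, hω.2⟩⟩
    have hgap : H ∩ {ω | visitTime X j k ω = t} ∩ {ω | visitGap X j k ω = d + 1} =
        H ∩ {ω | visitTime X j k ω = t} ∩ nextVisit X j t (d + 1) := by
      ext ω
      exact and_congr_right fun hω => visitGap_eq_succ_iff hω.2 ht d
    rw [hvisit, hgap]
    refine hX.measure_inter_nextVisit j d (hH t ht) ?_
    rintro ω ⟨-, rfl⟩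
    exact apply_visitTime ht

theorem measure_inter_visitGap_zero (hX : IsMarkovChain μ X P) (hj : hitProb P j j = 1) (k : ℕ) :
    μ ({ω | visitTime X j k ω ≠ 0} ∩ {ω | visitGap X j k ω = 0}) = 0 := by
  have := hX.isProb
  set R := {ω | visitTime X j k ω ≠ 0} with hR
  have hsucc : ∀ d, μ (R ∩ visitGap X j k ⁻¹' {d + 1}) =
      ENNReal.ofReal (fpass P j (d + 1) j) * μ R := fun d => by
    rw [hR, ← Set.univ_inter {ω | visitTime X j k ω ≠ 0}]
    exact hX.measure_inter_visitGap_succ determinedUpToVisit_univ d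
  have htotal : μ (R ∩ visitGap X j k ⁻¹' {0}) + μ R = 0 + μ R := by
    calc μ (R ∩ visitGap X j k ⁻¹' {0}) + μ R
        = μ (R ∩ visitGap X j k ⁻¹' {0}) + ∑' d, μ (R ∩ visitGap X j k ⁻¹' {d + 1}) := by
          rw [tsum_congr hsucc, ENNReal.tsum_mul_right,
            tsum_ofReal_fpass_succ hX.nonneg hX.rowSum hj, one_mul]
      _ = ∑' d, μ (R ∩ visitGap X j k ⁻¹' {d}) :=
        (tsum_eq_zero_add' (f := fun d => μ (R ∩ visitGap X j k ⁻¹' {d})) ENNReal.summable).symm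
      _ = 0 + μ R := by rw [tsum_measure_inter_fiber (hX.measurable_visitGap j k), zero_add]
  exact (ENNReal.add_left_inj (measure_ne_top μ _)).1 htotal

theorem ae_visitTime_ne_zero (hX : IsMarkovChain μ X P) (hj : hitProb P j j = 1) :
    ∀ᵐ ω ∂μ, visitTime X j 0 ω ≠ 0 → ∀ k, visitTime X j k ω ≠ 0 := by
  have hgap : ∀ᵐ ω ∂μ, ∀ k, visitTime X j k ω ≠ 0 → visitGap X j k ω ≠ 0 :=
    ae_all_iff.2 fun k => (measure_eq_zero_iff_ae_notMem.1
      (hX.measure_inter_visitGap_zero hj k)).mono fun ω hω hk hgap => hω ⟨hk, hgap⟩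
  filter_upwards [hgap] with ω hω h0 k
  induction k with
  | zero => exact h0
  | succ k ih => exact fun hk => hω k ih (by rw [visitGap, hk, Nat.zero_sub])

theorem measure_inter_visitGap (hX : IsMarkovChain μ X P) (hj : hitProb P j j = 1)
    (hH : DeterminedUpToVisit X j k H) (d : ℕ) :
    μ ({ω | visitTime X j 0 ω ≠ 0} ∩ (H ∩ {ω | visitGap X j k ω = d})) =
      ENNReal.ofReal (fpass P j d j) * μ ({ω | visitTime X j 0 ω ≠ 0} ∩ H) := by
  have hrec : ∀ G : Set Ω, μ ({ω | visitTime X j 0 ω ≠ 0} ∩ G) =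
      μ ({ω | visitTime X j k ω ≠ 0} ∩ G) := fun G => measure_congr <| by
    filter_upwards [hX.ae_visitTime_ne_zero hj] with ω hω
    exact propext (and_congr_left fun _ => ⟨fun h => hω h k, visitTime_ne_zero_anti k.zero_le⟩)
  rw [hrec, hrec, ← Set.inter_assoc, Set.inter_comm _ H]
  cases d with
  | zero =>
    rw [Set.inter_assoc, measure_mono_null Set.inter_subset_right
      (hX.measure_inter_visitGap_zero hj k), fpass, ENNReal.ofReal_zero, zero_mul]
  | succ d => exact hX.measure_inter_visitGap_succ hH d

theorem cond_inter_visitGap (hX : IsMarkovChain μ X P) (hj : hitProb P j j = 1)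
    (hH : DeterminedUpToVisit X j k H) (d : ℕ) :
    μ[|{ω | visitTime X j 0 ω ≠ 0}] (H ∩ {ω | visitGap X j k ω = d}) =
      ENNReal.ofReal (fpass P j d j) * μ[|{ω | visitTime X j 0 ω ≠ 0}] H := by
  have hmeas := hX.measurableSet_visitTime_ne_zero j 0
  rw [cond_apply hmeas, cond_apply hmeas, hX.measure_inter_visitGap hj hH, mul_left_comm]

theorem cond_visitGap_eq (hX : IsMarkovChain μ X P) (hj : hitProb P j j = 1)
    (hR : μ {ω | visitTime X j 0 ω ≠ 0} ≠ 0) (k d : ℕ) :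
    μ[|{ω | visitTime X j 0 ω ≠ 0}] {ω | visitGap X j k ω = d} =
      ENNReal.ofReal (fpass P j d j) := by
  have := hX.isProb
  have := cond_isProbabilityMeasure hR
  simpa only [Set.univ_inter, measure_univ, mul_one] using
    hX.cond_inter_visitGap hj (k := k) determinedUpToVisit_univ d

theorem identDistrib_visitGap (hX : IsMarkovChain μ X P) (hj : hitProb P j j = 1)
    (hR : μ {ω | visitTime X j 0 ω ≠ 0} ≠ 0) (k l : ℕ) :
    IdentDistrib (visitGap X j k) (visitGap X j l) μ[|{ω | visitTime X j 0 ω ≠ 0}]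
      μ[|{ω | visitTime X j 0 ω ≠ 0}] := by
  have hk := hX.measurable_visitGap j k
  have hl := hX.measurable_visitGap j l
  refine ⟨hk.aemeasurable, hl.aemeasurable, Measure.ext_of_singleton fun d => ?_⟩
  rw [Measure.map_apply hk (measurableSet_singleton d),
    Measure.map_apply hl (measurableSet_singleton d)]
  exact (hX.cond_visitGap_eq hj hR k d).trans (hX.cond_visitGap_eq hj hR l d).symm

theorem pairwise_indepFun_visitGap (hX : IsMarkovChain μ X P) (hj : hitProb P j j = 1)
    (hR : μ {ω | visitTime X j 0 ω ≠ 0} ≠ 0) :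
    Pairwise fun k l =>
      IndepFun (visitGap X j k) (visitGap X j l) μ[|{ω | visitTime X j 0 ω ≠ 0}] := by
  have hlt : ∀ k l, k < l →
      IndepFun (visitGap X j k) (visitGap X j l) μ[|{ω | visitTime X j 0 ω ≠ 0}] := by
    intro k l hkl
    refine indepFun_of_measure_inter_fiber (hX.measurable_visitGap j k)
      (hX.measurable_visitGap j l) fun c d => ?_
    refine (hX.cond_inter_visitGap hj (determinedUpToVisit_visitGap hkl c) d).trans ?_
    rw [← hX.cond_visitGap_eq hj hR l d, mul_comm]
    rfl
  intro k l hkl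
  obtain h | h := hkl.lt_or_gt
  exacts [hlt k l h, (hlt l k h).symm]

theorem lintegral_visitGap (hX : IsMarkovChain μ X P) (hj : hitProb P j j = 1)
    (hR : μ {ω | visitTime X j 0 ω ≠ 0} ≠ 0) (k : ℕ) :
    ∫⁻ ω, (visitGap X j k ω : ℝ≥0∞) ∂μ[|{ω | visitTime X j 0 ω ≠ 0}] = meanReturn P j := by
  have hk := hX.measurable_visitGap j k
  rw [← lintegral_map (f := fun n : ℕ => (n : ℝ≥0∞)) (measurable_of_countable _) hk,
    lintegral_countable', meanReturn]
  refine tsum_congr fun d => ?_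
  rw [Measure.map_apply hk (measurableSet_singleton d), ← hX.cond_visitGap_eq hj hR k d]
  rfl

theorem integrable_visitGap (hX : IsMarkovChain μ X P) (hj : PositiveRecurrent P j)
    (hR : μ {ω | visitTime X j 0 ω ≠ 0} ≠ 0) (k : ℕ) :
    Integrable (fun ω => (visitGap X j k ω : ℝ)) μ[|{ω | visitTime X j 0 ω ≠ 0}] := by
  simpa only [ENNReal.toReal_natCast] using integrable_toReal_of_lintegral_ne_top
    (hX.aemeasurable_visitGap_ennreal j k _) ((hX.lintegral_visitGap hj.1 hR k).trans_ne hj.2.ne)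

theorem integral_visitGap (hX : IsMarkovChain μ X P) (hj : hitProb P j j = 1)
    (hR : μ {ω | visitTime X j 0 ω ≠ 0} ≠ 0) (k : ℕ) :
    ∫ ω, (visitGap X j k ω : ℝ) ∂μ[|{ω | visitTime X j 0 ω ≠ 0}] = (meanReturn P j).toReal := by
  rw [← hX.lintegral_visitGap hj hR k, ← integral_toReal (hX.aemeasurable_visitGap_ennreal j k _)
    (ae_of_all _ fun ω => ENNReal.natCast_lt_top _)]
  simp only [ENNReal.toReal_natCast]

theorem ae_tendsto_sum_visitGap_div (hX : IsMarkovChain μ X P) (hj : PositiveRecurrent P j)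
    (hR : μ {ω | visitTime X j 0 ω ≠ 0} ≠ 0) :
    ∀ᵐ ω ∂μ[|{ω | visitTime X j 0 ω ≠ 0}],
      Tendsto (fun k : ℕ => (∑ l ∈ Finset.range k, (visitGap X j l ω : ℝ)) / k) atTop
        (𝓝 (meanReturn P j).toReal) := by
  have hcast : Measurable ((↑) : ℕ → ℝ) := measurable_from_top
  rw [← hX.integral_visitGap hj.1 hR 0]
  exact strong_law_ae_real (fun k ω => (visitGap X j k ω : ℝ)) (hX.integrable_visitGap hj hR 0)
    (fun k l hkl => (hX.pairwise_indepFun_visitGap hj.1 hR hkl).comp hcast hcast)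
    (fun k => (hX.identDistrib_visitGap hj.1 hR k 0).comp hcast)

theorem ae_tendsto_visitTime_div (hX : IsMarkovChain μ X P) (hj : PositiveRecurrent P j) :
    ∀ᵐ ω ∂μ, visitTime X j 0 ω ≠ 0 →
      Tendsto (fun k : ℕ => (visitTime X j k ω : ℝ) / k) atTop (𝓝 (meanReturn P j).toReal) := by
  have := hX.isProb
  by_cases hR : μ {ω | visitTime X j 0 ω ≠ 0} = 0
  · filter_upwards [measure_eq_zero_iff_ae_notMem.1 hR] with ω hω h using absurd h hω
  have hlaw := hX.ae_tendsto_sum_visitGap_div hj hR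
  rw [ProbabilityTheory.cond,
    Measure.ae_ennreal_smul_measure_eq (ENNReal.inv_ne_zero.2 (measure_ne_top μ _)),
    ae_restrict_iff' (hX.measurableSet_visitTime_ne_zero j 0)] at hlaw
  filter_upwards [hlaw, hX.ae_visitTime_ne_zero hj.1] with ω hlim hvisit h0
  have hfirst := tendsto_const_div_atTop_nhds_zero_nat (visitTime X j 0 ω : ℝ)
  refine (zero_add (meanReturn P j).toReal ▸ hfirst.add (hlim h0)).congr fun k => ?_
  rw [visitTime_eq_add_sum_visitGap (hvisit h0 k), Nat.cast_add, Nat.cast_sum, add_div]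

theorem ae_tendsto_visits_div_of_measurableSingletonClass (hX : IsMarkovChain μ X P)
    (hj : PositiveRecurrent P j) : ∀ᵐ ω ∂μ, (∃ n ≥ 1, X n ω = j) →
      Tendsto (fun n : ℕ => visits X j n ω / n) atTop (𝓝 (meanReturn P j).toReal⁻¹) := by
  filter_upwards [hX.ae_tendsto_visitTime_div hj, hX.ae_visitTime_ne_zero hj.1]
    with ω hlim hvisit hω
  have h0 := visitTime_zero_ne_zero_iff.2 hω
  exact tendsto_visits_div (hvisit h0) (hlim h0)

end MeasurableSingletonClass

end IsMarkovChain

section Trace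

variable {Ω β : Type*} [MeasurableSpace Ω] {μ : Measure Ω} {B C D : Set Ω}

/-- The Carathéodory condition for `C` tested on the single set `D`: the outer measure of `D`, which
need not be measurable, is the sum of those of its two parts. The reverse inequality is
subadditivity. -/
def SplitsAlong (μ : Measure Ω) (D C : Set Ω) : Prop :=
  μ (D ∩ C) + μ (D \ C) ≤ μ D

theorem SplitsAlong.inter (hC : SplitsAlong μ D C) (hB : SplitsAlong μ (D ∩ C) B) :
    SplitsAlong μ D (C ∩ B) :=
  calc μ (D ∩ (C ∩ B)) + μ (D \ (C ∩ B))
      ≤ μ (D ∩ C ∩ B) + (μ ((D ∩ C) \ B) + μ (D \ C)) := by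
        rw [← Set.inter_assoc]
        gcongr
        refine (measure_mono fun ω hω => ?_).trans (measure_union_le _ _)
        by_cases hωC : ω ∈ C
        exacts [Or.inl ⟨⟨hω.1, hωC⟩, fun hωB => hω.2 ⟨hωC, hωB⟩⟩, Or.inr ⟨hω.1, hωC⟩]
    _ ≤ μ (D ∩ C) + μ (D \ C) := by
        rw [← add_assoc]
        gcongr
        exact hB
    _ ≤ μ D := hC

theorem splitsAlong_of_disjoint (h : Disjoint D C) : SplitsAlong μ D C := by
  rw [SplitsAlong, h.inter_eq, measure_empty, zero_add]
  exact measure_mono Set.sdiff_subset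

theorem splitsAlong_fiber_of_tsum_le [Countable β] {g : Ω → β}
    (h : ∑' b, μ (C ∩ g ⁻¹' {b}) ≤ μ C) (b : β) : SplitsAlong μ C (g ⁻¹' {b}) := by
  classical
  have hcover : C \ g ⁻¹' {b} ⊆ ⋃ c, if c = b then ∅ else C ∩ g ⁻¹' {c} := fun ω hω =>
    Set.mem_iUnion.2 ⟨g ω, (if_neg (show g ω ≠ b from hω.2)).symm ▸ ⟨hω.1, rfl⟩⟩
  calc μ (C ∩ g ⁻¹' {b}) + μ (C \ g ⁻¹' {b})
      ≤ μ (C ∩ g ⁻¹' {b}) + ∑' c, if c = b then 0 else μ (C ∩ g ⁻¹' {c}) := by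
        gcongr
        refine (measure_mono hcover).trans ((measure_iUnion_le _).trans_eq (tsum_congr fun c => ?_))
        split_ifs
        exacts [measure_empty, rfl]
    _ = ∑' c, μ (C ∩ g ⁻¹' {c}) :=
        (ENNReal.tsum_eq_add_tsum_ite (f := fun c => μ (C ∩ g ⁻¹' {c})) b).symm
    _ ≤ μ C := h

theorem SplitsAlong.isCaratheodory_restrict (h : SplitsAlong μ D C) (hD : μ D ≠ ∞) :
    (OuterMeasure.restrict D μ.toOuterMeasure).IsCaratheodory C := by
  set A := toMeasurable μ (D ∩ C)
  have hA : D ∩ C ⊆ A := subset_toMeasurable _ _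
  have hAm : MeasurableSet A := measurableSet_toMeasurable _ _
  have hnull : μ (D \ C ∩ A) = 0 := by
    have hsdiff : (D \ C) \ A = D \ A := by
      ext ω
      exact ⟨fun hω => ⟨hω.1.1, hω.2⟩, fun hω => ⟨⟨hω.1, fun hC => hω.2 (hA ⟨hω.1, hC⟩)⟩, hω.2⟩⟩
    have hle : μ (D \ C ∩ A) + μ D ≤ 0 + μ D := calc
      μ (D \ C ∩ A) + μ D = μ (D \ C ∩ A) + (μ (D ∩ A) + μ (D \ A)) := by
        rw [measure_inter_add_sdiff D hAm]
      _ ≤ μ (D \ C ∩ A) + (μ (D ∩ C) + μ (D \ A)) := by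
        gcongr 2
        exact (measure_mono Set.inter_subset_right).trans_eq (measure_toMeasurable _)
      _ = μ (D ∩ C) + μ (D \ C) := by
        rw [add_left_comm, ← hsdiff, measure_inter_add_sdiff _ hAm]
      _ ≤ 0 + μ D := by rwa [zero_add]
    exact nonpos_iff_eq_zero.1 ((ENNReal.add_le_add_iff_right hD).1 hle)
  refine (OuterMeasure.isCaratheodory_iff_le' _).2 fun t => ?_
  simp only [OuterMeasure.restrict_apply, Measure.coe_toOuterMeasure]
  calc μ (t ∩ C ∩ D) + μ (t \ C ∩ D)
      ≤ μ (t ∩ D ∩ A) + μ ((t ∩ D) \ A ∪ D \ C ∩ A) := by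
        refine add_le_add (measure_mono fun ω hω => ⟨⟨hω.1.1, hω.2⟩, hA ⟨hω.2, hω.1.2⟩⟩)
          (measure_mono fun ω hω => ?_)
        by_cases hωA : ω ∈ A
        exacts [Or.inr ⟨⟨hω.2, hω.1.2⟩, hωA⟩, Or.inl ⟨⟨hω.1.1, hω.2⟩, hωA⟩]
    _ ≤ μ (t ∩ D ∩ A) + (μ ((t ∩ D) \ A) + μ (D \ C ∩ A)) := by
        gcongr
        exact measure_union_le _ _
    _ = μ (t ∩ D) := by rw [hnull, add_zero, measure_inter_add_sdiff _ hAm]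

end Trace

section ArbitraryStateSpace

variable {Ω E : Type*} {X : ℕ → Ω → E} {P : E → E → ℝ} [Countable E]

theorem measurable_of_measurableSet_path [MeasurableSpace Ω] [MeasurableSpace E] {n : ℕ}
    (h : ∀ ω, MeasurableSet {ω' | ∀ m ≤ n, X m ω' = X m ω}) : Measurable (X n) := by
  refine (measurable_pi_apply (Fin.last n)).comp
    (measurable_to_countable' (f := pathUpTo X n) fun g => ?_)
  obtain hempty | ⟨ω, rfl⟩ := (pathUpTo X n ⁻¹' {g}).eq_empty_or_nonempty
  · exact hempty ▸ MeasurableSet.empty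
  · convert h ω using 1
    ext ω'
    exact pathUpTo_eq_iff

theorem exists_isMarkovChain_of_isCaratheodory (m : OuterMeasure Ω) (h0 : m Set.univ ≠ 0)
    (htop : m Set.univ ≠ ∞) (hP : ∀ i j, 0 ≤ P i j) (hrow : ∀ i, ∑' j, P i j = 1)
    (hpath : ∀ n (f : ℕ → E), m.IsCaratheodory {ω | ∀ k ≤ n, X k ω = f k})
    (hmarkov : ∀ n j (f : ℕ → E), m ({ω | X (n + 1) ω = j} ∩ {ω | ∀ k ≤ n, X k ω = f k}) =
      ENNReal.ofReal (P (f n) j) * m {ω | ∀ k ≤ n, X k ω = f k}) :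
    ∃ (mΩ : MeasurableSpace Ω) (ν : @Measure Ω mΩ), @IsMarkovChain E Ω mΩ ⊤ ν X P ∧
      ∀ t, ν t = 0 → m t = 0 := by
  let _ : MeasurableSpace Ω := m.caratheodory
  let _ : MeasurableSpace E := ⊤
  have hpath_meas : ∀ n (f : ℕ → E), MeasurableSet {ω | ∀ k ≤ n, X k ω = f k} := hpath
  have hX : ∀ n, Measurable (X n) := fun n =>
    measurable_of_measurableSet_path fun ω => hpath_meas n fun k => X k ω
  refine ⟨m.caratheodory, (m Set.univ)⁻¹ • m.toMeasure le_rfl, ⟨⟨?_⟩, hX, hP, hrow, ?_⟩,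
    fun t ht => ?_⟩
  · rw [Measure.smul_apply, toMeasure_apply _ _ MeasurableSet.univ, smul_eq_mul,
      ENNReal.inv_mul_cancel h0 htop]
  · intro n j f
    have hstep : MeasurableSet ({ω | X (n + 1) ω = j} ∩ {ω | ∀ k ≤ n, X k ω = f k}) :=
      (hX (n + 1) (measurableSet_singleton j)).inter (hpath_meas n f)
    rw [Measure.smul_apply, Measure.smul_apply, toMeasure_apply _ _ (hpath_meas n f),
      toMeasure_apply _ _ hstep, hmarkov, smul_eq_mul, smul_eq_mul, mul_left_comm]
  · rw [Measure.smul_apply, smul_eq_mul, mul_eq_zero,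
      or_iff_right (ENNReal.inv_ne_zero.2 htop)] at ht
    exact nonpos_iff_eq_zero.1 ((le_toMeasure_apply m le_rfl t).trans_eq ht)

variable [MeasurableSpace Ω] [MeasurableSpace E] {μ : Measure Ω}

namespace IsMarkovChain

theorem splitsAlong_succ (hX : IsMarkovChain μ X P) (n : ℕ) (f : ℕ → E) (y : E) :
    SplitsAlong μ {ω | ∀ m ≤ n, X m ω = f m} {ω | X (n + 1) ω = y} := by
  refine splitsAlong_fiber_of_tsum_le (le_of_eq ?_) y
  calc ∑' y, μ ({ω | ∀ m ≤ n, X m ω = f m} ∩ {ω | X (n + 1) ω = y})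
      = ∑' y, ENNReal.ofReal (P (f n) y) * μ {ω | ∀ m ≤ n, X m ω = f m} :=
        tsum_congr fun y => by rw [Set.inter_comm, hX.markov]
    _ = μ {ω | ∀ m ≤ n, X m ω = f m} := by
        rw [ENNReal.tsum_mul_right, tsum_ofReal_row hX.nonneg hX.rowSum, one_mul]

theorem splitsAlong_path (hX : IsMarkovChain μ X P) (i : E) (n : ℕ) (f : ℕ → E) :
    SplitsAlong μ {ω | X 0 ω = i} {ω | ∀ m ≤ n, X m ω = f m} := by
  by_cases hf : f 0 = i
  · subst hf
    induction n with
    | zero => simp [SplitsAlong]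
    | succ n ih =>
      have hstart : {ω | X 0 ω = f 0} ∩ {ω | ∀ m ≤ n, X m ω = f m} =
          {ω | ∀ m ≤ n, X m ω = f m} := Set.inter_eq_right.2 fun ω hω => hω 0 n.zero_le
      have hsucc : {ω | ∀ m ≤ n + 1, X m ω = f m} =
          {ω | ∀ m ≤ n, X m ω = f m} ∩ {ω | X (n + 1) ω = f (n + 1)} := by
        ext ω
        simp only [Nat.le_succ_iff_eq_or_le, forall_eq_or_imp, Set.mem_inter_iff, Set.mem_ofPred_eq]
        exact and_comm
      rw [hsucc]
      exact ih.inter (hstart.symm ▸ hX.splitsAlong_succ n f _)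
  · exact splitsAlong_of_disjoint <| Set.disjoint_left.2 fun ω hi hω =>
      hf ((hω 0 n.zero_le).symm.trans hi)

theorem exists_discrete (hX : IsMarkovChain μ X P) {i : E} (hi : μ {ω | X 0 ω = i} ≠ 0) :
    ∃ (mΩ : MeasurableSpace Ω) (ν : @Measure Ω mΩ), @IsMarkovChain E Ω mΩ ⊤ ν X P ∧
      ∀ t, ν t = 0 → μ (t ∩ {ω | X 0 ω = i}) = 0 := by
  have := hX.isProb
  have happly : ∀ t, OuterMeasure.restrict {ω | X 0 ω = i} μ.toOuterMeasure t =
      μ (t ∩ {ω | X 0 ω = i}) := fun t => by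
    rw [OuterMeasure.restrict_apply, Measure.coe_toOuterMeasure]
  simp_rw [← happly]
  refine exists_isMarkovChain_of_isCaratheodory _ ?_ ?_ hX.nonneg hX.rowSum (fun n f =>
    (hX.splitsAlong_path i n f).isCaratheodory_restrict (measure_ne_top μ _)) fun n y f => ?_
  · rwa [happly, Set.univ_inter]
  · rw [happly]
    exact measure_ne_top μ _
  · rw [happly, happly, Set.inter_assoc]
    by_cases hf : f 0 = i
    · have hstart : {ω | ∀ m ≤ n, X m ω = f m} ⊆ {ω | X 0 ω = i} :=
        fun ω hω => (hω 0 n.zero_le).trans hf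
      rw [Set.inter_eq_left.2 hstart, hX.markov]
    · have hempty : {ω | ∀ m ≤ n, X m ω = f m} ∩ {ω | X 0 ω = i} = ∅ :=
        Set.eq_empty_of_forall_notMem fun ω hω => hf ((hω.1 0 n.zero_le).symm.trans hω.2)
      simp [hempty]

theorem ae_tendsto_visits_div [DecidableEq E] (hX : IsMarkovChain μ X P) {j : E}
    (hj : PositiveRecurrent P j) : ∀ᵐ ω ∂μ, (∃ n ≥ 1, X n ω = j) →
      Tendsto (fun n : ℕ => visits X j n ω / n) atTop (𝓝 (meanReturn P j).toReal⁻¹) := by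
  rw [ae_iff]
  set N := {ω | ¬ ((∃ n ≥ 1, X n ω = j) →
    Tendsto (fun n : ℕ => visits X j n ω / n) atTop (𝓝 (meanReturn P j).toReal⁻¹))}
  have hN : N = ⋃ i, N ∩ {ω | X 0 ω = i} := by
    rw [← Set.inter_iUnion, Set.iUnion_eq_univ_iff.2 fun ω => ⟨X 0 ω, rfl⟩, Set.inter_univ]
  rw [hN]
  refine measure_iUnion_null fun i => ?_
  by_cases hi : μ {ω | X 0 ω = i} = 0
  · exact measure_mono_null Set.inter_subset_right hi
  · obtain ⟨_, ν, hν, hnull⟩ := hX.exists_discrete hi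
    exact hnull N (ae_iff.1
      (@ae_tendsto_visits_div_of_measurableSingletonClass _ _ _ ⊤ _ _ _ _ _ _ _ hν hj))

end IsMarkovChain

end ArbitraryStateSpace

/-- For a positive recurrent state `j`, conditionally on `A_i = {X_0 = i} ∩ {∃ n ≥ 1, X_n = j}`,
the fraction of time spent at `j` converges almost surely to `1/m_j`. -/
theorem visits_div_n_tendsto_cond
    {Ω : Type*} [MeasurableSpace Ω] [MeasurableSpace S] (μ : Measure Ω)
    (X : ℕ → Ω → S) (P : S → S → ℝ) (hMC : IsMarkovChain μ X P) (j : S)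
    (hj : PositiveRecurrent P j) (i : S)
    (hA : 0 < μ ({ω | X 0 ω = i} ∩ {ω | ∃ n ≥ 1, X n ω = j})) :
    μ[|{ω | X 0 ω = i} ∩ {ω | ∃ n ≥ 1, X n ω = j}]
        {ω | Tendsto (fun n : ℕ => visits X j n ω / (n : ℝ)) atTop
          (𝓝 ((meanReturn P j).toReal⁻¹))} = 1 := by
  have := hMC.isProb
  exact cond_eq_one_of_ae_imp hA.ne'
    ((hMC.ae_tendsto_visits_div hj).mono fun ω hω hωA => hω hωA.2)
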